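/- arXiv:2307.05906 — 2 statements merged into one kernel-verified Lean document; each statement's English description precedes it below -/
import Mathlib

section
/- Let 2 ≤ B < N ≤ d + 1. Over pairs (u, v) with ‖u i‖ = ‖v i‖ = 1 for all i, the set of minimizers of the average mini-batch loss (1/C(N,B)) Σ_{S ⊆ Fin N, |S| = B} L_S(u,v) equals the set of minimizers of the full-batch loss L(u,v); in particular, any pair (u,v) with u = v whose family (u i) forms a simplex ETF minimizes the average mini-batch loss over all unit-norm pairs. -/
open scoped RealInnerProductSpace BigOperators
open Finset

noncomputable def fullLoss {N d : ℕ} (u v : Fin N → EuclideanSpace ℝ (Fin d)) : ℝ :=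
  -(1/(N:ℝ)) * ∑ i, Real.log (Real.exp ⟪u i, v i⟫ / ∑ j, Real.exp ⟪u i, v j⟫)
  - (1/(N:ℝ)) * ∑ i, Real.log (Real.exp ⟪v i, u i⟫ / ∑ j, Real.exp ⟪v i, u j⟫)

noncomputable def batchLoss {N d : ℕ} (S : Finset (Fin N))
    (u v : Fin N → EuclideanSpace ℝ (Fin d)) : ℝ :=
  -(1/(S.card : ℝ)) * ∑ i ∈ S, Real.log (Real.exp ⟪u i, v i⟫ / ∑ j ∈ S, Real.exp ⟪u i, v j⟫)
  - (1/(S.card : ℝ)) * ∑ i ∈ S, Real.log (Real.exp ⟪v i, u i⟫ / ∑ j ∈ S, Real.exp ⟪v i, u j⟫)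

def IsSimplexETF {N d : ℕ} (u : Fin N → EuclideanSpace ℝ (Fin d)) : Prop :=
  (∀ i, ‖u i‖ = 1) ∧ ∀ i j, i ≠ j → ⟪u i, u j⟫ = -(1/((N:ℝ) - 1))

def IsSimplexCrossPolytope {N d : ℕ} (u : Fin N → EuclideanSpace ℝ (Fin d)) : Prop :=
  (∀ i, ‖u i‖ = 1) ∧ ∀ i, ∃ j, ⟪u i, u j⟫ = -1 ∧ (∀ j', ⟪u i, u j'⟫ = -1 → j' = j) ∧
    ∀ k, k ≠ i → k ≠ j → ⟪u i, u k⟫ = 0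

def SymmAntipodal {N d : ℕ} (u v : Fin N → EuclideanSpace ℝ (Fin d)) : Prop :=
  u = v ∧ ∀ i, ∃ j, u j = -(u i)

noncomputable def avgBatchLoss {N d : ℕ} (B : ℕ)
    (u v : Fin N → EuclideanSpace ℝ (Fin d)) : ℝ :=
  (1/(N.choose B : ℝ)) * ∑ S ∈ Finset.powersetCard B (Finset.univ : Finset (Fin N)), batchLoss S u v

lemma aux_g_nonneg (t : ℝ) : 0 ≤ Real.exp t - 1 - t := by
  linarith [Real.add_one_le_exp t]

lemma aux_g_zero (t : ℝ) (h : Real.exp t - 1 - t = 0) : t = 0 := by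
  by_contra h0
  linarith [Real.add_one_lt_exp h0]

/-- exact expansion of the partition function around the simplex point -/
lemma aux_expand {ι : Type*} [DecidableEq ι] (S : Finset ι) (i : ι) (hi : i ∈ S) (x : ι → ℝ)
    (hx : x i = 0) (c Z T : ℝ) (hZ : Z = 1 + ((S.card : ℝ) - 1) * Real.exp (-c)) (hZ0 : 0 < Z)
    (hT : T = Real.exp (-c) / Z * ∑ j ∈ S.erase i, (x j + c)) :
    ∑ j ∈ S, Real.exp (x j) = Real.exp T * (Z + ((Real.exp (-T) - 1 - (-T)) +
      Real.exp (-c) * ∑ j ∈ S.erase i, (Real.exp (x j + c - T) - 1 - (x j + c - T)))) := by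
  rw [← Finset.add_sum_erase S _ hi, hx]
  have hc : ((S.erase i).card : ℝ) = (S.card : ℝ) - 1 := by
    rw [Finset.card_erase_of_mem hi, Nat.cast_sub (Finset.card_pos.mpr ⟨i, hi⟩)]; simp
  have h1 : ∑ j ∈ S.erase i, Real.exp (x j) =
      Real.exp T * Real.exp (-c) * ∑ j ∈ S.erase i, Real.exp (x j + c - T) := by
    rw [Finset.mul_sum]
    refine Finset.sum_congr rfl fun j _ => ?_
    rw [← Real.exp_add, ← Real.exp_add]; congr 1; ring
  have h2 : ∑ j ∈ S.erase i, (Real.exp (x j + c - T) - 1 - (x j + c - T)) =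
      ∑ j ∈ S.erase i, Real.exp (x j + c - T) - ((S.card : ℝ) - 1) * (1 - T)
        - ∑ j ∈ S.erase i, (x j + c) := by
    simp only [Finset.sum_sub_distrib, Finset.sum_const, nsmul_eq_mul, hc]; ring
  have h3 : Real.exp (-c) * ∑ j ∈ S.erase i, (x j + c) = Z * T := by
    rw [hT]; field_simp
  have h4 : Real.exp T * Real.exp (-T) = 1 := by rw [← Real.exp_add]; simp
  rw [h1, h2, Real.exp_zero]
  linear_combination (-1) * h4 + Real.exp T * h3 - Real.exp T * (1-T) * hZ

noncomputable def auxG {ι : Type*} [DecidableEq ι] (S : Finset ι) (i : ι) (x : ι → ℝ) (c Z : ℝ) : ℝ :=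
  Real.log (∑ j ∈ S, Real.exp (x j)) - Real.log Z -
    Real.exp (-c) / Z * ∑ j ∈ S.erase i, (x j + c)

lemma aux_lse {ι : Type*} [DecidableEq ι] (S : Finset ι) (i : ι) (hi : i ∈ S) (x : ι → ℝ)
    (hx : x i = 0) (c Z : ℝ) (hZ : Z = 1 + ((S.card : ℝ) - 1) * Real.exp (-c)) (hZ0 : 0 < Z) :
    0 ≤ auxG S i x c Z ∧
     (auxG S i x c Z = 0 → ∀ j ∈ S, j ≠ i → x j = -c) := by
  obtain ⟨T, hT⟩ : ∃ T, T = Real.exp (-c) / Z * ∑ j ∈ S.erase i, (x j + c) := ⟨_, rfl⟩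
  have he := aux_expand S i hi x hx c Z T hZ hZ0 hT
  have hs : 0 ≤ ∑ j ∈ S.erase i, (Real.exp (x j + c - T) - 1 - (x j + c - T)) :=
    Finset.sum_nonneg fun j _ => aux_g_nonneg _
  have hg := aux_g_nonneg (-T)
  have hec := Real.exp_pos (-c)
  have hm := mul_nonneg hec.le hs
  unfold auxG
  rw [he, ← hT, Real.log_mul (Real.exp_pos _).ne' (by positivity), Real.log_exp]
  constructor
  · have := Real.log_le_log hZ0 (le_add_of_nonneg_right (a := Z) (add_nonneg hg hm))
    linarith
  · intro h j hj hji
    have h' := Real.log_injOn_pos (Set.mem_Ioi.2 (by positivity)) (Set.mem_Ioi.2 hZ0)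
      (show Real.log (Z + ((Real.exp (-T) - 1 - (-T)) +
      Real.exp (-c) * ∑ j ∈ S.erase i, (Real.exp (x j + c - T) - 1 - (x j + c - T)))) = Real.log Z by
        linarith)
    have hT0 := aux_g_zero (-T) (by linarith)
    have hs0 : ∑ j ∈ S.erase i, (Real.exp (x j + c - T) - 1 - (x j + c - T)) = 0 := by
      have : Real.exp (-c) * ∑ j ∈ S.erase i, (Real.exp (x j + c - T) - 1 - (x j + c - T)) = 0 := by
        linarith
      exact (mul_eq_zero.1 this).resolve_left hec.ne'
    have := (Finset.sum_eq_zero_iff_of_nonneg (fun j _ => aux_g_nonneg _)).1 hs0 j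
      (Finset.mem_erase.2 ⟨hji, hj⟩)
    have := aux_g_zero _ this
    linarith

lemma aux_count {N B : ℕ} (hB : 2 ≤ B) (i j : Fin N) (hij : i ≠ j) :
    ((Finset.powersetCard B (Finset.univ : Finset (Fin N))).filter (fun S => i ∈ S ∧ j ∈ S)).card
      = (N - 2).choose (B - 2) := by
  have hc : ((Finset.univ : Finset (Fin N)) \ {i, j}).card = N - 2 := by
    rw [Finset.card_sdiff_of_subset (Finset.subset_univ _), Finset.card_pair hij]; simp
  rw [← hc, ← Finset.card_powersetCard]
  refine Finset.card_bij' (fun S _ => S \ {i, j}) (fun S _ => S ∪ {i, j}) ?_ ?_ ?_ ?_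
  · intro S hS
    simp only [Finset.mem_filter, Finset.mem_powersetCard] at hS
    rw [Finset.mem_powersetCard]
    refine ⟨Finset.sdiff_subset_sdiff hS.1.1 le_rfl, ?_⟩
    rw [Finset.card_sdiff_of_subset, Finset.card_pair hij, hS.1.2]
    grind
  · intro S hS
    rw [Finset.mem_powersetCard] at hS
    simp only [Finset.mem_filter, Finset.mem_powersetCard]
    refine ⟨⟨Finset.subset_univ _, ?_⟩, by grind, by grind⟩
    rw [Finset.card_union_of_disjoint, Finset.card_pair hij, hS.2]
    · omega
    · rw [Finset.disjoint_left]; grind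
  · intro S hS
    simp only [Finset.mem_filter, Finset.mem_powersetCard] at hS
    grind
  · intro S hS
    rw [Finset.mem_powersetCard] at hS
    grind

lemma aux_sum_count {N B : ℕ} (hB : 2 ≤ B) (y : Fin N → Fin N → ℝ) :
    ∑ S ∈ Finset.powersetCard B (Finset.univ : Finset (Fin N)), ∑ i ∈ S, ∑ j ∈ S.erase i, y i j
     = ((N - 2).choose (B - 2) : ℝ) * ∑ i, ∑ j ∈ Finset.univ.erase i, y i j := by
  have h1 : ∀ S : Finset (Fin N), ∑ i ∈ S, ∑ j ∈ S.erase i, y i j =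
      ∑ i, ∑ j ∈ Finset.univ.erase i, if i ∈ S ∧ j ∈ S then y i j else 0 := by
    intro S
    rw [← Finset.sum_filter_add_sum_filter_not Finset.univ (fun i => i ∈ S)]
    rw [Finset.sum_eq_zero (s := Finset.univ.filter (fun i => ¬ i ∈ S)), add_zero]
    · rw [Finset.filter_mem_eq_inter, Finset.univ_inter]
      refine Finset.sum_congr rfl fun i hi => ?_
      rw [← Finset.sum_filter]
      refine Finset.sum_congr ?_ fun _ _ => rfl
      grind
    · intro i hi
      refine Finset.sum_eq_zero fun j _ => ?_
      grind
  rw [Finset.sum_congr rfl fun S _ => h1 S, Finset.sum_comm, Finset.mul_sum]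
  refine Finset.sum_congr rfl fun i _ => ?_
  rw [Finset.sum_comm, Finset.mul_sum]
  refine Finset.sum_congr rfl fun j hj => ?_
  rw [← Finset.sum_filter, Finset.sum_const, aux_count hB i j (by grind), nsmul_eq_mul]

lemma aux_quad {N d : ℕ} (u v : Fin N → EuclideanSpace ℝ (Fin d))
    (hu : ∀ i, ‖u i‖ = 1) (hv : ∀ i, ‖v i‖ = 1) :
    0 ≤ ⟪∑ i, u i, ∑ i, v i⟫ - N * ∑ i, ⟪u i, v i⟫ + (N : ℝ)^2 ∧
    (⟪∑ i, u i, ∑ i, v i⟫ - N * ∑ i, ⟪u i, v i⟫ + (N : ℝ)^2 = 0 → u = v) := by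
  have h1 : ∑ i, ‖u i - v i‖^2 = 2 * N - 2 * ∑ i, ⟪u i, v i⟫ := by
    simp only [norm_sub_sq_real, hu, hv, Finset.sum_add_distrib, Finset.sum_sub_distrib,
      ← Finset.mul_sum]
    simp; ring
  have h2 : ‖∑ i, u i - ∑ i, v i‖^2 ≤ N * ∑ i, ‖u i - v i‖^2 := by
    rw [← Finset.sum_sub_distrib]
    calc ‖∑ i, (u i - v i)‖^2 ≤ (∑ i, ‖u i - v i‖)^2 := by
          gcongr; exact norm_sum_le _ _
      _ ≤ _ := by
          simpa using sq_sum_le_card_mul_sum_sq (s := Finset.univ) (f := fun i => ‖u i - v i‖)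
  have h3 := norm_sub_sq_real (∑ i, u i) (∑ i, v i)
  rw [h1] at h2
  have hU := sq_nonneg ‖∑ i, u i‖
  have hV := sq_nonneg ‖∑ i, v i‖
  refine ⟨by nlinarith, fun h => ?_⟩
  have hU0 : ‖∑ i, u i‖^2 = 0 := by nlinarith
  have hU1 : ∑ i, u i = 0 := by simpa using hU0
  rw [hU1, inner_zero_left] at h
  have h4 : N * ∑ i, ‖u i - v i‖^2 = 0 := by rw [h1]; linarith
  funext i
  have hN : (N : ℝ) ≠ 0 := by
    have := i.pos; positivity
  have h5 := (mul_eq_zero.1 h4).resolve_left hN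
  have := (Finset.sum_eq_zero_iff_of_nonneg (fun j _ => sq_nonneg _)).1 h5 i (Finset.mem_univ _)
  have h6 : ‖u i - v i‖ = 0 := by simpa using this
  exact sub_eq_zero.1 (norm_eq_zero.1 h6)

lemma aux_sum_x {N d : ℕ} (hN : 2 ≤ N) (u v : Fin N → EuclideanSpace ℝ (Fin d)) :
    ∑ i, ∑ j ∈ Finset.univ.erase i, (⟪u i, v j⟫ - ⟪u i, v i⟫ + (N : ℝ) / (N - 1)) =
     ⟪∑ i, u i, ∑ i, v i⟫ - N * ∑ i, ⟪u i, v i⟫ + (N : ℝ)^2 := by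
  have hN' : (N : ℝ) - 1 ≠ 0 := by
    have : (2 : ℝ) ≤ N := by exact_mod_cast hN
    linarith
  have h1 : ∀ i, ∑ j ∈ Finset.univ.erase i, (⟪u i, v j⟫ - ⟪u i, v i⟫ + (N : ℝ) / (N - 1)) =
     ⟪u i, ∑ j, v j⟫ - N * ⟪u i, v i⟫ + N := by
    intro i
    rw [Finset.sum_erase_eq_sub (Finset.mem_univ i), inner_sum]
    simp only [Finset.sum_add_distrib, Finset.sum_sub_distrib, Finset.sum_const, Finset.card_univ,
      Fintype.card_fin, nsmul_eq_mul]
    field_simp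
    ring
  rw [Finset.sum_congr rfl fun i _ => h1 i, Finset.sum_add_distrib, Finset.sum_sub_distrib,
    ← Finset.mul_sum, ← sum_inner]
  simp; ring

lemma aux_log {ι : Type*} (S : Finset ι) (a : ι → ℝ) (i : ι) :
    Real.log (Real.exp (a i) / ∑ j ∈ S, Real.exp (a j)) =
      - Real.log (∑ j ∈ S, Real.exp (a j - a i)) := by
  rw [← Real.log_inv]
  congr 1
  simp only [Real.exp_sub, ← Finset.sum_div]
  rw [inv_div]

lemma aux_batch {N d : ℕ} (S : Finset (Fin N)) (u v : Fin N → EuclideanSpace ℝ (Fin d)) :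
    batchLoss S u v = (1/(S.card : ℝ)) * ∑ i ∈ S,
      (Real.log (∑ j ∈ S, Real.exp (⟪u i, v j⟫ - ⟪u i, v i⟫))
       + Real.log (∑ j ∈ S, Real.exp (⟪v i, u j⟫ - ⟪v i, u i⟫))) := by
  unfold batchLoss
  rw [Finset.sum_congr rfl fun i _ => aux_log S (fun j => ⟪u i, v j⟫) i,
    Finset.sum_congr rfl fun i _ => aux_log S (fun j => ⟪v i, u j⟫) i]
  rw [Finset.sum_add_distrib, Finset.sum_neg_distrib, Finset.sum_neg_distrib]
  ring

noncomputable def auxZ (N B : ℕ) : ℝ := 1 + ((B : ℝ) - 1) * Real.exp (-((N : ℝ) / (N - 1)))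

lemma auxZ_pos (N B : ℕ) (hB : 2 ≤ B) : 0 < auxZ N B := by
  have : (2 : ℝ) ≤ B := by exact_mod_cast hB
  have := mul_nonneg (by linarith : (0 : ℝ) ≤ (B : ℝ) - 1) (Real.exp_pos (-((N : ℝ) / (N - 1)))).le
  unfold auxZ; linarith

lemma aux_avg {N B d : ℕ} (hB : 2 ≤ B) (hBN : B ≤ N) (u v : Fin N → EuclideanSpace ℝ (Fin d)) :
    avgBatchLoss B u v = 2 * Real.log (auxZ N B) + (1 / (N.choose B : ℝ)) * (1 / (B : ℝ)) *
      (∑ S ∈ Finset.powersetCard B (Finset.univ : Finset (Fin N)), ∑ i ∈ S,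
        (auxG S i (fun j => ⟪u i, v j⟫ - ⟪u i, v i⟫) ((N : ℝ) / (N - 1)) (auxZ N B) +
         auxG S i (fun j => ⟪v i, u j⟫ - ⟪v i, u i⟫) ((N : ℝ) / (N - 1)) (auxZ N B))
       + Real.exp (-((N : ℝ) / (N - 1))) / auxZ N B * ((N - 2).choose (B - 2) : ℝ) *
        ((⟪∑ i, u i, ∑ i, v i⟫ - N * ∑ i, ⟪u i, v i⟫ + (N : ℝ)^2) +
         (⟪∑ i, v i, ∑ i, u i⟫ - N * ∑ i, ⟪v i, u i⟫ + (N : ℝ)^2))) := by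
  have hN : 2 ≤ N := hB.trans hBN
  have hC : (N.choose B : ℝ) ≠ 0 := by exact_mod_cast (Nat.choose_pos hBN).ne'
  have hB0 : (B : ℝ) ≠ 0 := by positivity
  have hcard : ∑ S ∈ Finset.powersetCard B (Finset.univ : Finset (Fin N)), ∑ i ∈ S,
      (2 * Real.log (auxZ N B)) = N.choose B * B * (2 * Real.log (auxZ N B)) := by
    rw [Finset.sum_congr rfl (g := fun _ => (B : ℝ) * (2 * Real.log (auxZ N B)))]
    · simp [mul_assoc]
    · intro S hS
      rw [Finset.sum_const, (Finset.mem_powersetCard.1 hS).2, nsmul_eq_mul]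
  have e1 := aux_sum_count (N := N) hB (fun i j => ⟪u i, v j⟫ - ⟪u i, v i⟫ + (N : ℝ) / (N - 1))
  have e2 := aux_sum_count (N := N) hB (fun i j => ⟪v i, u j⟫ - ⟪v i, u i⟫ + (N : ℝ) / (N - 1))
  rw [aux_sum_x hN] at e1 e2
  have key : ∑ S ∈ Finset.powersetCard B (Finset.univ : Finset (Fin N)), batchLoss S u v =
      (1 / (B : ℝ)) * (∑ S ∈ Finset.powersetCard B (Finset.univ : Finset (Fin N)), ∑ i ∈ S,
      (2 * Real.log (auxZ N B)) +
      ∑ S ∈ Finset.powersetCard B (Finset.univ : Finset (Fin N)), ∑ i ∈ S,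
        (auxG S i (fun j => ⟪u i, v j⟫ - ⟪u i, v i⟫) ((N : ℝ) / (N - 1)) (auxZ N B) +
         auxG S i (fun j => ⟪v i, u j⟫ - ⟪v i, u i⟫) ((N : ℝ) / (N - 1)) (auxZ N B)) +
      Real.exp (-((N : ℝ) / (N - 1))) / auxZ N B *
        (∑ S ∈ Finset.powersetCard B (Finset.univ : Finset (Fin N)), ∑ i ∈ S, ∑ j ∈ S.erase i,
          (⟪u i, v j⟫ - ⟪u i, v i⟫ + (N : ℝ) / (N - 1)) +
         ∑ S ∈ Finset.powersetCard B (Finset.univ : Finset (Fin N)), ∑ i ∈ S, ∑ j ∈ S.erase i,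
          (⟪v i, u j⟫ - ⟪v i, u i⟫ + (N : ℝ) / (N - 1)))) := by
    rw [← Finset.sum_add_distrib, ← Finset.sum_add_distrib, Finset.mul_sum, ← Finset.sum_add_distrib,
      Finset.mul_sum]
    refine Finset.sum_congr rfl fun S hS => ?_
    rw [aux_batch, (Finset.mem_powersetCard.1 hS).2]
    congr 1
    rw [← Finset.sum_add_distrib, ← Finset.sum_add_distrib, Finset.mul_sum, ← Finset.sum_add_distrib]
    refine Finset.sum_congr rfl fun i _ => ?_
    unfold auxG
    ring
  unfold avgBatchLoss
  rw [key, hcard, e1, e2]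
  field_simp
  ring

def auxP {N d : ℕ} (u v : Fin N → EuclideanSpace ℝ (Fin d)) : Prop :=
  u = v ∧ IsSimplexETF u

lemma auxG_nonneg {N B : ℕ} (hB : 2 ≤ B) (S : Finset (Fin N)) (hS : S.card = B) (i : Fin N)
    (hi : i ∈ S) (a : Fin N → ℝ) :
    0 ≤ auxG S i (fun j => a j - a i) ((N : ℝ) / (N - 1)) (auxZ N B) :=
  (aux_lse S i hi _ (by simp) _ _ (by rw [hS]; rfl) (auxZ_pos N B hB)).1

lemma aux_lower {N B d : ℕ} (hB : 2 ≤ B) (hBN : B ≤ N) (u v : Fin N → EuclideanSpace ℝ (Fin d))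
    (hu : ∀ i, ‖u i‖ = 1) (hv : ∀ i, ‖v i‖ = 1) :
    2 * Real.log (auxZ N B) ≤ avgBatchLoss B u v ∧
    (avgBatchLoss B u v = 2 * Real.log (auxZ N B) → auxP u v) := by
  have hN : 2 ≤ N := hB.trans hBN
  rw [aux_avg hB hBN]
  have hC : 0 < (1 / (N.choose B : ℝ)) * (1 / (B : ℝ)) := by
    have := Nat.choose_pos hBN
    positivity
  have hq : 0 < Real.exp (-((N : ℝ) / (N - 1))) / auxZ N B * ((N - 2).choose (B - 2) : ℝ) := by
    have := Nat.choose_pos (show B - 2 ≤ N - 2 by omega)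
    have := auxZ_pos N B hB
    positivity
  have h1 := aux_quad u v hu hv
  have h2 := (aux_quad v u hv hu).1
  have hGn : ∀ S ∈ Finset.powersetCard B (Finset.univ : Finset (Fin N)), ∀ i ∈ S, 0 ≤
        (auxG S i (fun j => ⟪u i, v j⟫ - ⟪u i, v i⟫) ((N : ℝ) / (N - 1)) (auxZ N B) +
         auxG S i (fun j => ⟪v i, u j⟫ - ⟪v i, u i⟫) ((N : ℝ) / (N - 1)) (auxZ N B)) := by
    intro S hS i hi
    have hS' := (Finset.mem_powersetCard.1 hS).2
    exact add_nonneg (auxG_nonneg hB S hS' i hi (fun j => ⟪u i, v j⟫))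
      (auxG_nonneg hB S hS' i hi (fun j => ⟪v i, u j⟫))
  have hGs : ∀ S ∈ Finset.powersetCard B (Finset.univ : Finset (Fin N)), 0 ≤ ∑ i ∈ S,
        (auxG S i (fun j => ⟪u i, v j⟫ - ⟪u i, v i⟫) ((N : ℝ) / (N - 1)) (auxZ N B) +
         auxG S i (fun j => ⟪v i, u j⟫ - ⟪v i, u i⟫) ((N : ℝ) / (N - 1)) (auxZ N B)) :=
    fun S hS => Finset.sum_nonneg (hGn S hS)
  have hG := Finset.sum_nonneg hGs
  have hQ := mul_nonneg hq.le (add_nonneg h1.1 h2)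
  refine ⟨le_add_of_nonneg_right (mul_nonneg hC.le (add_nonneg hG hQ)), fun h => ?_⟩
  have h0 := (mul_eq_zero.1 (add_eq_left.1 h)).resolve_left hC.ne'
  have hG0 := (add_eq_zero_iff_of_nonneg hG hQ).1 h0
  have hQ0 := (mul_eq_zero.1 hG0.2).resolve_left hq.ne'
  have huv := h1.2 ((add_eq_zero_iff_of_nonneg h1.1 h2).1 hQ0).1
  refine ⟨huv, hu, fun i j hij => ?_⟩
  obtain ⟨S, hsub, -, hS⟩ := Finset.exists_subsuperset_card_eq (Finset.subset_univ ({i, j} : Finset (Fin N)))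
    (n := B) (by rw [Finset.card_pair hij]; exact hB) (by simpa using hBN)
  have hiS : i ∈ S := hsub (by simp)
  have hjS : j ∈ S := hsub (by simp)
  have hSm : S ∈ Finset.powersetCard B (Finset.univ : Finset (Fin N)) :=
    Finset.mem_powersetCard.2 ⟨Finset.subset_univ _, hS⟩
  have a1 := (Finset.sum_eq_zero_iff_of_nonneg hGs).1 hG0.1 S hSm
  have a2 := (Finset.sum_eq_zero_iff_of_nonneg (hGn S hSm)).1 a1 i hiS
  have a3 := ((add_eq_zero_iff_of_nonneg (auxG_nonneg hB S hS i hiS (fun j => ⟪u i, v j⟫))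
      (auxG_nonneg hB S hS i hiS (fun j => ⟪v i, u j⟫))).1 a2).1
  have a4 := (aux_lse S i hiS _ (by simp) _ _ (by rw [hS]; rfl) (auxZ_pos N B hB)).2 a3 j hjS hij.symm
  simp only [← huv, real_inner_self_eq_norm_sq, hu] at a4
  have hN' : (N : ℝ) - 1 ≠ 0 := by
    have : (2 : ℝ) ≤ N := by exact_mod_cast hN
    linarith
  field_simp at a4 ⊢
  linarith

lemma aux_eq {N B d : ℕ} (hB : 2 ≤ B) (hBN : B ≤ N) (u v : Fin N → EuclideanSpace ℝ (Fin d))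
    (h : auxP u v) : avgBatchLoss B u v = 2 * Real.log (auxZ N B) := by
  obtain ⟨rfl, hu, hE⟩ := h
  have hN : 2 ≤ N := hB.trans hBN
  have hN' : (N : ℝ) - 1 ≠ 0 := by
    have : (2 : ℝ) ≤ N := by exact_mod_cast hN
    linarith
  have hB0 : (B : ℝ) ≠ 0 := by positivity
  have hC : (N.choose B : ℝ) ≠ 0 := by exact_mod_cast (Nat.choose_pos hBN).ne'
  have hb : ∀ S ∈ Finset.powersetCard B (Finset.univ : Finset (Fin N)),
      batchLoss S u u = 2 * Real.log (auxZ N B) := by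
    intro S hS
    have hS' := (Finset.mem_powersetCard.1 hS).2
    have : ∀ i ∈ S, ∑ j ∈ S, Real.exp (⟪u i, u j⟫ - ⟪u i, u i⟫) = auxZ N B := by
      intro i hi
      rw [← Finset.add_sum_erase S _ hi, sub_self, Real.exp_zero,
        Finset.sum_congr rfl (g := fun _ => Real.exp (-((N : ℝ) / (N - 1))))]
      · rw [Finset.sum_const, Finset.card_erase_of_mem hi, hS', nsmul_eq_mul,
          Nat.cast_sub (by omega)]
        simp [auxZ]
      · intro j hj
        rw [hE i j (Finset.ne_of_mem_erase hj).symm, real_inner_self_eq_norm_sq, hu]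
        congr 1
        field_simp
        ring
    rw [aux_batch, hS', Finset.sum_congr rfl (g := fun _ => 2 * Real.log (auxZ N B))]
    · rw [Finset.sum_const, hS', nsmul_eq_mul]; field_simp
    · intro i hi
      rw [this i hi]; ring
  unfold avgBatchLoss
  rw [Finset.sum_congr rfl hb, Finset.sum_const, Finset.card_powersetCard, Finset.card_univ,
    Fintype.card_fin, nsmul_eq_mul]
  field_simp

lemma aux_full {N d : ℕ} (u v : Fin N → EuclideanSpace ℝ (Fin d)) :
    fullLoss u v = avgBatchLoss N u v := by
  unfold avgBatchLoss
  have : Finset.powersetCard N (Finset.univ : Finset (Fin N)) = {Finset.univ} := by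
    have h := Finset.powersetCard_self (Finset.univ : Finset (Fin N))
    rwa [Finset.card_univ, Fintype.card_fin] at h
  rw [this]
  simp [fullLoss, batchLoss]

lemma aux_exists {N d : ℕ} (hN : 2 ≤ N) (hNd : N ≤ d + 1) :
    ∃ u : Fin N → EuclideanSpace ℝ (Fin d), IsSimplexETF u := by
  have hN2 : (2 : ℝ) ≤ N := by exact_mod_cast hN
  have hN0 : (N : ℝ) ≠ 0 := by linarith
  have hN' : (N : ℝ) - 1 ≠ 0 := by linarith
  let e : Fin N → EuclideanSpace ℝ (Fin N) := fun i => EuclideanSpace.single i 1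
  let o : EuclideanSpace ℝ (Fin N) := ∑ i, e i
  have hee : ∀ i j, ⟪e i, e j⟫ = if i = j then (1 : ℝ) else 0 := by
    intro i j
    simp [e, EuclideanSpace.inner_single_left, eq_comm]
  have heo : ∀ i, ⟪o, e i⟫ = (1 : ℝ) := by
    intro i; simp [o, sum_inner, hee]
  have heo' : ∀ i, ⟪e i, o⟫ = (1 : ℝ) := by
    intro i; rw [real_inner_comm, heo]
  have hoo : ⟪o, o⟫ = (N : ℝ) := by
    conv_lhs => arg 3; rw [show o = ∑ i, e i from rfl]
    rw [inner_sum]; simp [heo]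
  have ho : o ≠ 0 := by
    intro h; rw [h, inner_zero_left] at hoo; exact hN0 hoo.symm
  let z : Fin N → EuclideanSpace ℝ (Fin N) := fun i => e i - (1 / (N : ℝ)) • o
  have hzo : ∀ i, ⟪o, z i⟫ = (0 : ℝ) := by
    intro i
    simp only [z, inner_sub_right, inner_smul_right, heo, hoo]; field_simp; ring
  have hzz : ∀ i j, ⟪z i, z j⟫ = (if i = j then (1 : ℝ) else 0) - 1 / N := by
    intro i j
    rw [show z i = e i - (1 / (N : ℝ)) • o from rfl, inner_sub_left, real_inner_smul_left, hzo]
    simp only [z, inner_sub_right, inner_smul_right, hee, heo']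
    ring
  obtain ⟨K, hKdef⟩ : ∃ K, K = (ℝ ∙ o)ᗮ := ⟨_, rfl⟩
  have hK : Module.finrank ℝ K + 1 = N := by
    have h1 := Submodule.finrank_add_finrank_orthogonal (ℝ ∙ o)
    rw [finrank_span_singleton ho, finrank_euclideanSpace_fin, ← hKdef] at h1
    omega
  let w : Fin N → K := fun i => ⟨z i, hKdef ▸ Submodule.mem_orthogonal_singleton_iff_inner_right.2 (hzo i)⟩
  have hww : ∀ i j, ⟪w i, w j⟫ = (if i = j then (1 : ℝ) else 0) - 1 / N := fun i j => hzz i j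
  let b := stdOrthonormalBasis ℝ K
  have hle : Module.finrank ℝ K ≤ d := by omega
  let f : Fin (Module.finrank ℝ K) → EuclideanSpace ℝ (Fin d) :=
    fun k => EuclideanSpace.single (Fin.castLE hle k) 1
  have hf : Orthonormal ℝ f := by
    have := EuclideanSpace.orthonormal_single (𝕜 := ℝ) (ι := Fin d)
    exact this.comp _ (Fin.castLE_injective hle)
  let y : Fin N → EuclideanSpace ℝ (Fin d) := fun i => ∑ k, ⟪w i, b k⟫ • f k
  have hyy : ∀ i j, ⟪y i, y j⟫ = (if i = j then (1 : ℝ) else 0) - 1 / N := by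
    intro i j
    rw [← hww, ← b.sum_inner_mul_inner]
    simp only [y]
    rw [hf.inner_sum]
    refine Finset.sum_congr rfl fun k _ => ?_
    rw [real_inner_comm (w j)]; simp
  let s : ℝ := Real.sqrt (N / (N - 1))
  have hs : s * s = N / (N - 1) := Real.mul_self_sqrt (div_nonneg (by linarith) (by linarith))
  have hS : ∀ i j, ⟪s • y i, s • y j⟫ = (N / (N - 1)) * ((if i = j then (1 : ℝ) else 0) - 1 / N) := by
    intro i j
    rw [real_inner_smul_left, real_inner_smul_right, hyy, ← mul_assoc, hs]
  refine ⟨fun i => s • y i, fun i => ?_, fun i j hij => ?_⟩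
  · have := hS i i
    rw [real_inner_self_eq_norm_sq, if_pos rfl] at this
    have h1 : ‖s • y i‖ ^ 2 = 1 := by rw [this]; field_simp
    exact (pow_eq_one_iff_of_nonneg (norm_nonneg _) two_ne_zero).1 h1
  · rw [hS, if_neg hij]; field_simp; ring

lemma aux_min {N B d : ℕ} (hB : 2 ≤ B) (hBN : B ≤ N) (hNd : N ≤ d + 1)
    (u v : Fin N → EuclideanSpace ℝ (Fin d)) (hu : ∀ i, ‖u i‖ = 1) (hv : ∀ i, ‖v i‖ = 1) :
    (∀ u' v' : Fin N → EuclideanSpace ℝ (Fin d),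
          (∀ i, ‖u' i‖ = 1) → (∀ i, ‖v' i‖ = 1) →
          avgBatchLoss B u v ≤ avgBatchLoss B u' v') ↔ auxP u v := by
  constructor
  · intro h
    obtain ⟨w, hw⟩ := aux_exists (hB.trans hBN) hNd
    have h1 := h w w hw.1 hw.1
    rw [aux_eq hB hBN w w ⟨rfl, hw⟩] at h1
    have h2 := aux_lower hB hBN u v hu hv
    exact h2.2 (le_antisymm h1 h2.1)
  · intro h u' v' hu' hv'
    rw [aux_eq hB hBN u v h]
    exact (aux_lower hB hBN u' v' hu' hv').1

/-- For `2 ≤ B < N ≤ d + 1`, over unit-norm pairs the minimizers of the average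
mini-batch loss over all `C(N,B)` mini-batches coincide with the minimizers of the
full-batch loss; in particular any symmetric simplex-ETF pair minimizes the average
mini-batch loss. -/
theorem avg_miniBatch_minimizers_eq_fullBatch_minimizers
    (N B d : ℕ) (hB : 2 ≤ B) (hBN : B < N) (hNd : N ≤ d + 1) :
    (∀ u v : Fin N → EuclideanSpace ℝ (Fin d),
      (∀ i, ‖u i‖ = 1) → (∀ i, ‖v i‖ = 1) →
      ((∀ u' v' : Fin N → EuclideanSpace ℝ (Fin d),
          (∀ i, ‖u' i‖ = 1) → (∀ i, ‖v' i‖ = 1) →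
          avgBatchLoss B u v ≤ avgBatchLoss B u' v') ↔
       (∀ u' v' : Fin N → EuclideanSpace ℝ (Fin d),
          (∀ i, ‖u' i‖ = 1) → (∀ i, ‖v' i‖ = 1) →
          fullLoss u v ≤ fullLoss u' v'))) ∧
    (∀ u v : Fin N → EuclideanSpace ℝ (Fin d), u = v → IsSimplexETF u →
      ∀ u' v' : Fin N → EuclideanSpace ℝ (Fin d),
        (∀ i, ‖u' i‖ = 1) → (∀ i, ‖v' i‖ = 1) →
        avgBatchLoss B u v ≤ avgBatchLoss B u' v') := by
  refine ⟨fun u v hu hv => ?_, fun u v huv hE u' v' hu' hv' => ?_⟩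
  · simp only [aux_full]
    rw [aux_min hB hBN.le hNd u v hu hv, aux_min (hB.trans hBN.le) le_rfl hNd u v hu hv]
  · exact (aux_min hB hBN.le hNd u v hE.1 (huv ▸ hE.1)).2 ⟨huv, hE⟩ u' v' hu' hv'
end

section
/- Let S ⊆ Fin N with |S| = B ≥ 2, and let u, v : Fin N → EuclideanSpace ℝ (Fin d) be arbitrary. Then L_S(u,v) ≥ (1/(B(B−1))) · Σ_{i ∈ S} Σ_{j ∈ S, j ≠ i} [ log( 1 + (B−1)·exp(⟪u i, v j − v i⟫) ) + log( 1 + (B−1)·exp(⟪v i, u j − u i⟫) ) ]. -/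
open scoped RealInnerProductSpace BigOperators
open Finset

theorem aux_row {N : ℕ} (S : Finset (Fin N)) (hS : 2 ≤ S.card) (i : Fin N) (hi : i ∈ S)
    (a : Fin N → ℝ) :
    ∑ j ∈ S.erase i, Real.log (1 + ((S.card:ℝ) - 1) * Real.exp (a j - a i))
      ≤ ((S.card:ℝ) - 1) * -(Real.log (Real.exp (a i) / ∑ j ∈ S, Real.exp (a j))) := by
  have hB : (2:ℝ) ≤ S.card := by exact_mod_cast hS
  have hcard : ((S.erase i).card : ℝ) = (S.card:ℝ) - 1 := by
    rw [Finset.card_erase_of_mem hi, Nat.cast_sub (by omega)]; simp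
  set b : ℝ := (S.card:ℝ) - 1 with hb
  have hb0 : 0 < b := by linarith
  set m : ℝ := 1 + ∑ j ∈ S.erase i, Real.exp (a j - a i) with hm
  have hm0 : 0 < m := by positivity
  have hlog : -(Real.log (Real.exp (a i) / ∑ j ∈ S, Real.exp (a j))) = Real.log m := by
    rw [← Real.log_inv, inv_div, ← Finset.add_sum_erase S _ hi, add_div, Finset.sum_div, hm,
      div_self (Real.exp_ne_zero _)]
    simp only [Real.exp_sub]
  rw [hlog]
  have key : ∀ j ∈ S.erase i, Real.log (1 + b * Real.exp (a j - a i))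
      ≤ Real.log m + ((1 + b * Real.exp (a j - a i)) / m - 1) := by
    intro j _
    have hx : 0 < 1 + b * Real.exp (a j - a i) := by positivity
    have := Real.log_le_sub_one_of_pos (div_pos hx hm0)
    rw [Real.log_div hx.ne' hm0.ne'] at this
    linarith
  refine (Finset.sum_le_sum key).trans (le_of_eq ?_)
  rw [Finset.sum_add_distrib, Finset.sum_sub_distrib, ← Finset.sum_div, Finset.sum_add_distrib,
    ← Finset.mul_sum]
  simp only [Finset.sum_const, nsmul_eq_mul, hcard]
  have : b * 1 + b * ∑ j ∈ S.erase i, Real.exp (a j - a i) = b * m := by rw [hm]; ring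
  rw [this, mul_div_cancel_right₀ _ hm0.ne']
  ring

/-- Jensen lower bound for the mini-batch contrastive loss of a batch of size `B ≥ 2`. -/
theorem batchLoss_ge_pairwise_bound (N d B : ℕ) (hB : 2 ≤ B)
    (S : Finset (Fin N)) (hS : S.card = B)
    (u v : Fin N → EuclideanSpace ℝ (Fin d)) :
    (1/((B:ℝ) * ((B:ℝ) - 1))) * ∑ i ∈ S, ∑ j ∈ S.erase i,
        (Real.log (1 + ((B:ℝ) - 1) * Real.exp ⟪u i, v j - v i⟫)
          + Real.log (1 + ((B:ℝ) - 1) * Real.exp ⟪v i, u j - u i⟫))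
      ≤ batchLoss S u v := by
  subst hS
  have hB' : (2:ℝ) ≤ S.card := by exact_mod_cast hB
  have h1 := Finset.sum_le_sum fun i hi => aux_row S hB i hi (fun j => ⟪u i, v j⟫)
  have h2 := Finset.sum_le_sum fun i hi => aux_row S hB i hi (fun j => ⟪v i, u j⟫)
  rw [← Finset.mul_sum, Finset.sum_neg_distrib] at h1 h2
  simp only [Finset.sum_add_distrib, inner_sub_right]
  unfold batchLoss
  have hb : (0:ℝ) < (S.card:ℝ) - 1 := by linarith
  have hc : (0:ℝ) < (S.card:ℝ) := by linarith
  rw [one_div_mul_eq_div, div_le_iff₀ (by positivity)]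
  refine (add_le_add h1 h2).trans (le_of_eq ?_)
  field_simp
  ring
end
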